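/- Let G be a finite multigraph drawn in the plane with V vertices and E edges, with edge multiplicity at most m, such that E ≥ 4mV. Then the number of edge crossings in the drawing is at least c·E³/(m·V²) for an absolute constant c > 0. -/

import Mathlib

open Set

/-!
Five points of the plane cannot be joined pairwise by paths such that paths without a common end
are disjoint. For two disjoint paths, a logarithm of the difference of their points shows that the
increments of `log (w - z)` along each path, at the two ends `z` of the other one, balance out. The
fifteen pairs of independent edges of `K₅` then give equations that contradict each other modulo 2.

Drawings in which only independent edges have to be disjoint survive edge contraction, so the
graphs with such a drawing form a minor-closed class without `K₅`. Mader's argument, which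
contracts an edge with at most two common neighbours at a vertex of degree at most five, bounds
their number of edges by `3n`.

Hence deleting one edge from each crossing pair bounds the edges of a simple graph by `3n` plus the
number of these pairs. Following Székely, this is applied to a random simple subgraph: keep
each vertex with probability `p = 4mV/E`, and one edge of each parallel class according to random
labels in `{1, …, m}`. Taking means gives `m p² E ≤ 3 m² p V + p⁴ X` for the number `X` of crossing
pairs.
-/

/-! ### Winding numbers and `K₅` -/

open Classical in
/-- The increment along `γ` of a continuous logarithm of `w ↦ w - z`, which is `2πi` times the
winding number around `z` when `γ` is closed. The value is `0` by convention if `γ` meets `z`. -/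
noncomputable def logIncrement {a b : ℂ} (γ : Path a b) (z : ℂ) : ℂ :=
  if h : ∃ g : ℝ → ℂ, Continuous g ∧ ∀ t, Complex.exp (g t) = γ.extend t - z then
    h.choose 1 - h.choose 0 else 0

theorem exists_continuous_exp_eq {X : Type*} [TopologicalSpace X] [SimplyConnectedSpace X]
    [LocallyPathConnectedSpace X] {f : X → ℂ} (hf : Continuous f) (h0 : ∀ x, f x ≠ 0) :
    ∃ g : X → ℂ, Continuous g ∧ ∀ x, Complex.exp (g x) = f x := by
  obtain ⟨x₀⟩ : Nonempty X := inferInstance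
  obtain ⟨g, ⟨-, hg⟩, -⟩ := Complex.isCoveringMapOn_exp.existsUnique_continuousMap_lifts ⟨f, hf⟩
    (a₀ := x₀) (e₀ := Complex.log (f x₀)) (Complex.exp_log (h0 x₀)) h0
  exact ⟨g, g.continuous, congrFun hg⟩

theorem logIncrement_eq {a b z : ℂ} {γ : Path a b} {g : ℝ → ℂ} (hg : Continuous g)
    (h : ∀ t, Complex.exp (g t) = γ.extend t - z) : logIncrement γ z = g 1 - g 0 := by
  have hex : ∃ g : ℝ → ℂ, Continuous g ∧ ∀ t, Complex.exp (g t) = γ.extend t - z := ⟨g, hg, h⟩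
  obtain ⟨hc, he⟩ := hex.choose_spec
  have hne (t : ℝ) : γ.extend t - z ≠ 0 := h t ▸ Complex.exp_ne_zero _
  have hconst := Complex.isCoveringMap_exp.const_of_comp (g := fun t => g t - hex.choose t)
    (hg.sub hc) (fun s t => by simp [Complex.exp_sub, h, he, hne]) 1 0
  rw [logIncrement, dif_pos hex]
  linear_combination -hconst

theorem exists_logIncrement_eq {a b z α β : ℂ} {γ : Path a b} (hγ : z ∉ range γ)
    (hα : Complex.exp α = a - z) (hβ : Complex.exp β = b - z) :
    ∃ n : ℤ, logIncrement γ z = β - α + n * (2 * Real.pi * Complex.I) := by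
  obtain ⟨g, hg, hexp⟩ := exists_continuous_exp_eq (f := fun t => γ.extend t - z)
    (by fun_prop) (fun t => sub_ne_zero.2 fun h => hγ (h ▸ γ.extend_range ▸ mem_range_self t))
  rw [← Complex.exp_eq_exp_iff_exists_int, logIncrement_eq hg hexp, Complex.exp_sub,
    Complex.exp_sub, hexp, hexp, hα, hβ, γ.extend_one, γ.extend_zero]

-- A logarithm of `γ s - δ t` on the unit square has total increment zero along the boundary.
theorem logIncrement_add_logIncrement {a b c d : ℂ} {γ : Path a b} {δ : Path c d}
    (h : Disjoint (range γ) (range δ)) :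
    logIncrement γ c + logIncrement δ b = logIncrement γ d + logIncrement δ a := by
  obtain ⟨g, hg, hexp⟩ := exists_continuous_exp_eq
    (f := fun x : ℝ × ℝ => γ.extend x.1 - δ.extend x.2) (by fun_prop) fun x =>
      sub_ne_zero.2 (h.ne_of_mem (mem_range_self (projIcc 0 1 zero_le_one x.1))
        (mem_range_self (projIcc 0 1 zero_le_one x.2)))
  have hγ (t : ℝ) : logIncrement γ (δ.extend t) = g (1, t) - g (0, t) :=
    logIncrement_eq (g := fun s => g (s, t)) (by fun_prop) fun s => hexp (s, t)
  have hδ (s : ℝ) : logIncrement δ (γ.extend s) = g (s, 1) - g (s, 0) := by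
    rw [logIncrement_eq (g := fun t => g (s, t) + Real.pi * Complex.I) (by fun_prop)
      fun t => by simp [Complex.exp_add, hexp]]
    ring
  have h₁ := hγ 0
  have h₂ := hγ 1
  have h₃ := hδ 0
  have h₄ := hδ 1
  simp only [Path.extend_zero, Path.extend_one] at h₁ h₂ h₃ h₄
  linear_combination h₁ - h₂ - h₃ + h₄

theorem exists_log_sub {ι : Type*} [LinearOrder ι] {p : ι → ℂ} (hp : Function.Injective p) :
    ∃ θ : ι → ι → ℂ, (∀ i j, i ≠ j → Complex.exp (θ i j) = p i - p j) ∧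
      ∀ i j, i < j → θ i j - θ j i = Real.pi * Complex.I := by
  refine ⟨fun i j => if i < j then Complex.log (p j - p i) + Real.pi * Complex.I
    else Complex.log (p i - p j), fun i j hij => ?_, fun i j hij => by simp [hij, hij.not_gt]⟩
  rcases hij.lt_or_gt with h | h
  · simp [h, Complex.exp_add, Complex.exp_log (sub_ne_zero.2 (hp.ne hij.symm))]
  · simp [h.not_gt, Complex.exp_log (sub_ne_zero.2 (hp.ne hij))]

-- Over all 15 pairs `ij`, `kl` with `i < j` and `k < l`, the halved right-hand sides add up to
-- the number of interleaving pairs, which is the odd number `5.choose 4`, while every `n i j k`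
-- occurs twice on the left.
theorem not_forall_two_mul_eq_of_sign {ε : Fin 5 → Fin 5 → ℤ}
    (hε : ∀ i j, i < j → ε i j = 1 ∧ ε j i = -1) (n : Fin 5 → Fin 5 → Fin 5 → ℤ) :
    ¬ ∀ i j k l, [i, j, k, l].Nodup →
      2 * (n i j k + n k l j - n i j l - n k l i) = ε i k + ε j l - ε j k - ε i l := by
  intro h
  have e01 := hε 0 1 (by decide)
  have e02 := hε 0 2 (by decide)
  have e03 := hε 0 3 (by decide)
  have e04 := hε 0 4 (by decide)
  have e12 := hε 1 2 (by decide)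
  have e13 := hε 1 3 (by decide)
  have e14 := hε 1 4 (by decide)
  have e23 := hε 2 3 (by decide)
  have e24 := hε 2 4 (by decide)
  have e34 := hε 3 4 (by decide)
  have h0123 := h 0 1 2 3 (by decide)
  have h0124 := h 0 1 2 4 (by decide)
  have h0134 := h 0 1 3 4 (by decide)
  have h0213 := h 0 2 1 3 (by decide)
  have h0214 := h 0 2 1 4 (by decide)
  have h0234 := h 0 2 3 4 (by decide)
  have h0312 := h 0 3 1 2 (by decide)
  have h0314 := h 0 3 1 4 (by decide)
  have h0324 := h 0 3 2 4 (by decide)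
  have h0412 := h 0 4 1 2 (by decide)
  have h0413 := h 0 4 1 3 (by decide)
  have h0423 := h 0 4 2 3 (by decide)
  have h1234 := h 1 2 3 4 (by decide)
  have h1324 := h 1 3 2 4 (by decide)
  have h1423 := h 1 4 2 3 (by decide)
  omega

theorem exists_not_disjoint_range_of_five_points (p : Fin 5 → ℂ)
    (c : ∀ i j, Path (p i) (p j)) :
    ∃ i j k l, [i, j, k, l].Nodup ∧ ¬ Disjoint (range (c i j)) (range (c k l)) := by
  by_contra! hdisj
  have hnotMem (i j k : Fin 5) (hijk : [i, j, k].Nodup) : p k ∉ range (c i j) := by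
    obtain ⟨l, hl⟩ : ∃ l, [i, j, k, l].Nodup := by decide +revert
    exact disjoint_right.1 (hdisj i j k l hl) ⟨0, (c k l).source⟩
  have hp : Function.Injective p := by
    intro i k hik
    by_contra hne
    obtain ⟨j, hj⟩ : ∃ j, [i, j, k].Nodup := by clear hik; decide +revert
    exact hnotMem i j k hj ⟨0, by rw [(c i j).source, hik]⟩
  obtain ⟨θ, hexp, hθ⟩ := exists_log_sub hp
  have hwinding (i j k : Fin 5) : ∃ n : ℤ, [i, j, k].Nodup →
      logIncrement (c i j) (p k) = θ j k - θ i k + n * (2 * Real.pi * Complex.I) := by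
    by_cases hijk : [i, j, k].Nodup
    · exact (exists_logIncrement_eq (hnotMem i j k hijk) (hexp i k (by grind))
        (hexp j k (by grind))).imp fun _ hn _ => hn
    · exact ⟨0, fun h => absurd h hijk⟩
  choose n hn using hwinding
  let ε (i j : Fin 5) : ℤ := if i < j then 1 else -1
  have hε (i j : Fin 5) (hij : i ≠ j) : θ i j - θ j i = ε i j * (Real.pi * Complex.I) := by
    rcases hij.lt_or_gt with h | h
    · simp [ε, h, hθ i j h]
    · simp [ε, h.not_gt, ← hθ j i h]
  refine not_forall_two_mul_eq_of_sign (ε := ε) (fun i j h => by simp [ε, h, h.not_gt]) n ?_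
  intro i j k l hijkl
  have hgrid := logIncrement_add_logIncrement (hdisj i j k l hijkl)
  rw [hn i j k (by grind), hn k l j (by grind), hn i j l (by grind), hn k l i (by grind)] at hgrid
  have hpi : (Real.pi * Complex.I : ℂ) ≠ 0 := by simp [Real.pi_ne_zero]
  rw [← Int.cast_inj (α := ℂ), ← mul_left_inj' hpi]
  push_cast
  linear_combination hgrid + hε i k (by grind) + hε j l (by grind) - hε j k (by grind) -
    hε i l (by grind)

/-! ### Minor-closed classes and separated drawings -/

/-- A drawing of `G` in `X` in which each edge `uv` lives in its own set `J u v` and only the sets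
of independent edges have to be disjoint: edges are joined paths rather than arcs, and edges that
share a vertex may meet. This weakening of planarity is what survives edge contraction. -/
def HasSeparatedDrawing {V : Type*} (X : Type*) [TopologicalSpace X] (G : SimpleGraph V) : Prop :=
  ∃ (p : V → X) (J : V → V → Set X), (∀ u v, G.Adj u v → JoinedIn (J u v) (p u) (p v)) ∧
    ∀ u v w z, G.Adj u v → G.Adj w z → Disjoint {u, v} ({w, z} : Set V) →
      Disjoint (J u v) (J w z)

/-- The contraction of the edge `uv` into `u`, on the same vertex set, where `v` becomes
isolated. -/
def contractEdge {V : Type*} [DecidableEq V] (G : SimpleGraph V) (u v : V) : SimpleGraph V :=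
  G.map (Function.update id v u)

/-- A class of graphs on the fixed vertex set `V` that is closed under taking minors. Instead of
being deleted, vertices become isolated. -/
structure IsMinorClosed {V : Type*} [DecidableEq V] (P : SimpleGraph V → Prop) : Prop where
  mono : ∀ ⦃G H : SimpleGraph V⦄, H ≤ G → P G → P H
  contract : ∀ ⦃G : SimpleGraph V⦄ ⦃u v : V⦄, G.Adj u v → P G → P (contractEdge G u v)

namespace HasSeparatedDrawing

variable {V X Y : Type*} [TopologicalSpace X] [TopologicalSpace Y] {G H : SimpleGraph V}

theorem mono (hG : HasSeparatedDrawing X G) (h : H ≤ G) : HasSeparatedDrawing X H := by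
  obtain ⟨p, J, hJ, hdisj⟩ := hG
  exact ⟨p, J, fun u v huv => hJ u v (h huv),
    fun u v w z huv hwz => hdisj u v w z (h huv) (h hwz)⟩

theorem map (hG : HasSeparatedDrawing X G) {f : X → Y} (hf : Continuous f)
    (hinj : Function.Injective f) : HasSeparatedDrawing Y G := by
  obtain ⟨p, J, hJ, hdisj⟩ := hG
  exact ⟨f ∘ p, fun u v => f '' J u v, fun u v huv => (hJ u v huv).map hf,
    fun u v w z huv hwz h => (disjoint_image_iff hinj).2 (hdisj u v w z huv hwz h)⟩

theorem cliqueFree_five (hG : HasSeparatedDrawing ℂ G) : G.CliqueFree 5 := by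
  by_contra hK
  obtain ⟨p, J, hJ, hdisj⟩ := hG
  let f := SimpleGraph.topEmbeddingOfNotCliqueFree hK
  have hadj {i j : Fin 5} (hij : i ≠ j) : G.Adj (f i) (f j) := f.map_rel_iff.2 hij
  have hpath (i j : Fin 5) : ∃ c : Path (p (f i)) (p (f j)), i ≠ j → range c ⊆ J (f i) (f j) := by
    by_cases hij : i = j
    · exact ⟨(Path.refl _).cast rfl (by rw [hij]), fun h => absurd hij h⟩
    · have hjoin := hJ _ _ (hadj hij)
      exact ⟨hjoin.somePath, fun _ => range_subset_iff.2 hjoin.somePath_mem⟩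
  choose c hc using hpath
  obtain ⟨i, j, k, l, hijkl, hmeet⟩ := exists_not_disjoint_range_of_five_points _ c
  refine hmeet ((hdisj _ _ _ _ (hadj (i := i) (j := j) (by grind))
    (hadj (i := k) (j := l) (by grind)) ?_).mono (hc i j (by grind)) (hc k l (by grind)))
  rw [← image_pair f, ← image_pair f, disjoint_image_iff f.injective]
  simp only [disjoint_insert_left, disjoint_singleton_left, mem_insert_iff, mem_singleton_iff]
  grind

theorem contract [DecidableEq V] (hG : HasSeparatedDrawing X G) {u v : V} (huv : G.Adj u v) :
    HasSeparatedDrawing X (contractEdge G u v) := by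
  obtain ⟨p, J, hJ, hdisj⟩ := hG
  let f := Function.update id v u
  let J' (a b : V) : Set X := ⋃ (x) (y) (_ : G.Adj x y ∧ f '' {x, y} ⊆ {a, b}), J x y
  have hsub {a b x y : V} (hxy : G.Adj x y) (h : f '' {x, y} ⊆ {a, b}) : J x y ⊆ J' a b :=
    fun z hz => mem_iUnion₂.2 ⟨x, y, mem_iUnion.2 ⟨⟨hxy, h⟩, hz⟩⟩
  have hretract {a b x y : V} (hxy : G.Adj x y) (h : f '' {x, y} ⊆ {a, b}) :
      JoinedIn (J' a b) (p (f x)) (p x) := by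
    by_cases hx : x = v
    · have hfx : f x = u := by simp [f, hx]
      have hfuv : f '' {u, v} ⊆ {a, b} := by
        rw [image_pair, show f u = u by simp [f, huv.ne], ← hx, hfx, pair_eq_singleton,
          singleton_subset_iff, ← hfx]
        exact h (mem_image_of_mem f (mem_insert x {y}))
      rw [hfx, hx]
      exact (hJ u v huv).mono (hsub huv hfuv)
    · have hfx : f x = x := by simp [f, hx]
      rw [hfx]
      exact JoinedIn.refl (hsub hxy h (hJ x y hxy).source_mem)
  refine ⟨p, J', ?_, ?_⟩
  · rintro a b ⟨-, x, y, hxy, rfl, rfl⟩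
    have h : f '' {x, y} ⊆ {f x, f y} := (image_pair f x y).subset
    exact (hretract hxy h).trans (((hJ x y hxy).mono (hsub hxy h)).trans
      (hretract hxy.symm (pair_comm x y ▸ h)).symm)
  · intro a b c d _ _ hab
    simp only [J', disjoint_iUnion_left, disjoint_iUnion_right]
    rintro x' y' ⟨hxy', h'⟩ x y ⟨hxy, h⟩
    exact hdisj x y x' y' hxy hxy' (hab.mono h h').of_image

theorem isMinorClosed [DecidableEq V] :
    IsMinorClosed (HasSeparatedDrawing X : SimpleGraph V → Prop) :=
  ⟨fun _ _ h hG => hG.mono h, fun _ _ _ huv hG => hG.contract huv⟩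

end HasSeparatedDrawing

section EdgeCount

variable {V : Type*} {G : SimpleGraph V}

theorem ncard_edgeSet_le_contractEdge [Finite V] [DecidableEq V] {u v : V} (huv : G.Adj u v) :
    G.edgeSet.ncard ≤
      (contractEdge G u v).edgeSet.ncard + 1 + (G.commonNeighbors u v).ncard := by
  let f := Function.update id v u
  let B := insert s(u, v) ((fun w => s(v, w)) '' G.commonNeighbors u v)
  have hB : B.ncard ≤ (G.commonNeighbors u v).ncard + 1 :=
    (ncard_insert_le _ _).trans (by gcongr; exact ncard_image_le)
  have hf (x : V) : f x = if x = v then u else x := Function.update_apply id v u x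
  have hv {a b : V} (hab : G.Adj a b) (h : s(a, b) ∉ B) : a = v → b ≠ u ∧ ¬ G.Adj u b := by
    rintro rfl
    refine ⟨?_, fun hub => h (mem_insert_of_mem _ ⟨b, ⟨hub, hab⟩, rfl⟩)⟩
    rintro rfl
    exact h (mem_insert_iff.2 (.inl Sym2.eq_swap))
  have hmaps : MapsTo (Sym2.map f) (G.edgeSet \ B) (contractEdge G u v).edgeSet := by
    refine Sym2.ind fun a b ⟨hab, hB⟩ => ⟨?_, a, b, hab, rfl, rfl⟩
    rw [SimpleGraph.mem_edgeSet] at hab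
    have h₁ := hv hab hB
    have h₂ := hv hab.symm (Sym2.eq_swap ▸ hB)
    grind [hab.ne]
  have hinj : InjOn (Sym2.map f) (G.edgeSet \ B) := by
    have key {a b c d : V} (hab : G.Adj a b) (hB : s(a, b) ∉ B) (hcd : G.Adj c d)
        (hB' : s(c, d) ∉ B) (hac : f a = f c) (hbd : f b = f d) : s(a, b) = s(c, d) := by
      have h₁ := hv hab hB
      have h₂ := hv hab.symm (Sym2.eq_swap ▸ hB)
      have h₃ := hv hcd hB'
      have h₄ := hv hcd.symm (Sym2.eq_swap ▸ hB')
      grind [hab.symm, hcd.symm]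
    refine Sym2.ind fun a b ⟨hab, hB⟩ => Sym2.ind fun c d ⟨hcd, hB'⟩ h => ?_
    rcases Sym2.eq_iff.1 h with ⟨hac, hbd⟩ | ⟨had, hbc⟩
    · exact key hab hB hcd hB' hac hbd
    · rw [key hab hB hcd.symm (Sym2.eq_swap ▸ hB') had hbc, Sym2.eq_swap]
  have := ncard_le_ncard_of_injOn _ hmaps hinj
  have := ncard_le_ncard_sdiff_add_ncard G.edgeSet B
  omega

theorem exists_le_ncard_edgeSet_eq {k : ℕ} (hk : k ≤ G.edgeSet.ncard) :
    ∃ H ≤ G, H.edgeSet.ncard = k := by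
  obtain ⟨F, hF, hcard⟩ := exists_subset_card_eq hk
  refine ⟨SimpleGraph.fromEdgeSet F, (SimpleGraph.fromEdgeSet_le G).2 ?_, ?_⟩
  · exact sdiff_subset.trans hF
  · rw [SimpleGraph.edgeSet_fromEdgeSet, ← hcard, sdiff_eq_left.2]
    exact disjoint_left.2 fun e he => G.not_isDiag_of_mem_edgeSet (hF he)

theorem exists_ncard_neighborSet_lt [Finite V] {S : Finset V} (hS : G.support ⊆ S) {d : ℕ}
    (hd : 2 * G.edgeSet.ncard < d * S.card) : ∃ v ∈ S, (G.neighborSet v).ncard < d := by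
  classical
  have := Fintype.ofFinite V
  have hdeg (v : V) : (G.neighborSet v).ncard = G.degree v := by
    rw [← G.card_neighborFinset_eq_degree, ← ncard_coe_finset, G.coe_neighborFinset]
  have hsum : ∑ v ∈ S, G.degree v = 2 * G.edgeSet.ncard := by
    rw [← G.coe_edgeFinset, ncard_coe_finset, ← G.sum_degrees_eq_twice_card_edges]
    refine Finset.sum_subset S.subset_univ fun v _ hv => ?_
    by_contra h
    exact hv (hS ((G.degree_pos_iff_mem_support v).1 (Nat.pos_of_ne_zero h)))
  simp only [hdeg]
  exact Finset.exists_lt_of_sum_lt (by simpa [hsum, mul_comm] using hd)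

theorem card_add_ncard_commonNeighbors_le [Finite V] {v w : V} {T : Finset V}
    (hT : ∀ x ∈ T, G.Adj v x ∧ ¬ G.Adj w x) :
    T.card + (G.commonNeighbors v w).ncard ≤ (G.neighborSet v).ncard := by
  have hdisj : Disjoint (T : Set V) (G.commonNeighbors v w) :=
    disjoint_left.2 fun x hx hx' => (hT x hx).2 hx'.2
  rw [← ncard_coe_finset, ← ncard_union_eq hdisj]
  exact ncard_le_ncard (union_subset (fun x hx => (hT x hx).1) fun x hx => hx.1)

end EdgeCount

section LowDegree

variable {V : Type*} {G : SimpleGraph V}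

theorem contractEdge_adj_of_ne [DecidableEq V] {u v a b : V} (hab : G.Adj a b) (ha : a ≠ v)
    (hb : b ≠ v) : (contractEdge G u v).Adj a b :=
  ⟨hab.ne, a, b, hab, Function.update_of_ne ha _ _, Function.update_of_ne hb _ _⟩

theorem contractEdge_adj_left [DecidableEq V] {u v b : V} (hvb : G.Adj v b) (hb : u ≠ b) :
    (contractEdge G u v).Adj u b :=
  ⟨hb, v, b, hvb, Function.update_self _ _ _, Function.update_of_ne hvb.ne' _ _⟩

theorem support_contractEdge_subset [DecidableEq V] {u v : V} (huv : G.Adj u v) :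
    (contractEdge G u v).support ⊆ G.support \ {v} := by
  rintro _ ⟨_, -, a, b, hab, rfl, rfl⟩
  have ha : a ∈ G.support := ⟨b, hab⟩
  have hu : u ∈ G.support := ⟨v, huv⟩
  grind [Function.update_apply, huv.ne]

theorem eq_bot_of_support_subset_singleton {x : V} (hG : G.support ⊆ {x}) : G = ⊥ :=
  SimpleGraph.eq_bot_iff_forall_not_adj.2 fun a b hab =>
    hab.ne ((hG ⟨b, hab⟩).trans (hG ⟨a, hab.symm⟩).symm)

theorem exists_dominating_pair {N : Finset V} (hN : 2 ≤ N.card)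
    (h : ∀ x ∈ N, ∀ y ∈ N, ∀ z ∈ N, x ≠ y → x ≠ z → y ≠ z →
      G.Adj x y ∨ G.Adj x z) :
    ∃ x ∈ N, ∃ y ∈ N, x ≠ y ∧ ∀ z ∈ N, z ≠ x → z ≠ y → G.Adj x z ∧ G.Adj y z := by
  by_cases hcomplete : ∃ x ∈ N, ∃ y ∈ N, x ≠ y ∧ ¬ G.Adj x y
  · obtain ⟨x, hx, y, hy, hxy, hadj⟩ := hcomplete
    refine ⟨x, hx, y, hy, hxy, fun z hz hzx hzy => ⟨?_, ?_⟩⟩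
    · exact (h x hx y hy z hz hxy hzx.symm hzy.symm).resolve_left hadj
    · exact (h y hy x hx z hz hxy.symm hzy.symm hzx.symm).resolve_left
        (mt SimpleGraph.Adj.symm hadj)
  · push Not at hcomplete
    obtain ⟨x, hx, y, hy, hxy⟩ := Finset.one_lt_card.1 hN
    exact ⟨x, hx, y, hy, hxy, fun z hz hzx hzy =>
      ⟨hcomplete x hx z hz hzx.symm, hcomplete y hy z hz hzy.symm⟩⟩

theorem exists_erase_isClique {R : Finset V} [DecidableEq V] (hR : R.card = 3)
    (h : ∀ x ∈ R, ∀ y ∈ R, ∀ z ∈ R, x ≠ y → x ≠ z → y ≠ z → G.Adj x y ∨ G.Adj x z) :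
    ∃ a ∈ R, G.IsClique (R.erase a) := by
  obtain ⟨a, b, c, hab, hac, hbc, rfl⟩ := Finset.card_eq_three.1 hR
  rcases h a (by simp) b (by simp) c (by simp) hab hac hbc with hadj | hadj
  · refine ⟨c, by simp, ?_⟩
    rw [show ({a, b, c} : Finset V).erase c = {a, b} by grind, Finset.coe_pair]
    exact SimpleGraph.isClique_pair.2 fun _ => hadj
  · refine ⟨b, by simp, ?_⟩
    rw [show ({a, b, c} : Finset V).erase b = {a, c} by grind, Finset.coe_pair]
    exact SimpleGraph.isClique_pair.2 fun _ => hadj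

theorem exists_contractEdge_isNClique_erase [DecidableEq V] {N : Finset V} (hN : N.card = 5)
    (h : ∀ x ∈ N, ∀ y ∈ N, ∀ z ∈ N, x ≠ y → x ≠ z → y ≠ z → G.Adj x y ∨ G.Adj x z) :
    ∃ a, ∃ x ∈ N, G.Adj a x ∧ (contractEdge G a x).IsNClique 4 (N.erase x) := by
  obtain ⟨x, hx, y, hy, hxy, hdom⟩ := exists_dominating_pair (by omega) h
  have hsub : (N.erase x).erase y ⊆ N :=
    (Finset.erase_subset _ _).trans (Finset.erase_subset _ _)
  obtain ⟨a, ha, hclique⟩ := exists_erase_isClique (R := (N.erase x).erase y)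
    (by rw [Finset.card_erase_of_mem (by grind), Finset.card_erase_of_mem hx, hN])
    fun p hp q hq r hr => h p (hsub hp) q (hsub hq) r (hsub hr)
  obtain ⟨hay, hax, haN⟩ : a ≠ y ∧ a ≠ x ∧ a ∈ N := by grind
  refine ⟨a, x, hx, (hdom a haN hax hay).1.symm,
    ⟨fun p hp q hq hpq => ?_, by rw [Finset.card_erase_of_mem hx, hN]⟩⟩
  obtain ⟨hpx, hpN⟩ := Finset.mem_erase.1 hp
  obtain ⟨hqx, hqN⟩ := Finset.mem_erase.1 hq
  by_cases hpa : p = a ∧ q ≠ y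
  · rw [hpa.1]
    exact contractEdge_adj_left (hdom q hqN hqx hpa.2).1 (hpa.1 ▸ hpq)
  by_cases hqa : q = a ∧ p ≠ y
  · rw [hqa.1]
    exact (contractEdge_adj_left (hdom p hpN hpx hqa.2).1 (hqa.1 ▸ hpq.symm)).symm
  refine contractEdge_adj_of_ne ?_ hpx hqx
  by_cases hpy : p = y
  · exact hpy ▸ (hdom q hqN hqx (hpy ▸ hpq.symm)).2
  by_cases hqy : q = y
  · exact hqy ▸ (hdom p hpN hpx hpy).2.symm
  exact hclique (by grind) (by grind) hpq

theorem exists_adj_ncard_commonNeighbors_le_two [Finite V] [DecidableEq V] (hK : G.CliqueFree 5)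
    (hK' : ∀ x y, G.Adj x y → (contractEdge G x y).CliqueFree 5) {v : V}
    (hpos : 0 < (G.neighborSet v).ncard) (hle : (G.neighborSet v).ncard ≤ 5) :
    ∃ w, G.Adj v w ∧ (G.commonNeighbors v w).ncard ≤ 2 := by
  by_contra! hcommon
  obtain ⟨N, hN⟩ := (G.neighborSet v).toFinite.exists_finset_coe
  have hadj (x : V) : x ∈ N ↔ G.Adj v x := by simp [← Finset.mem_coe, hN]
  have hmissing {x : V} (hx : x ∈ N) {T : Finset V} (hT : ∀ y ∈ T, y ∈ N ∧ ¬ G.Adj x y) :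
      T.card + 3 ≤ N.card := by
    rw [← ncard_coe_finset N, hN]
    refine le_trans ?_ (card_add_ncard_commonNeighbors_le fun y hy =>
      ⟨(hadj y).1 (hT y hy).1, (hT y hy).2⟩)
    gcongr
    exact hcommon x ((hadj x).1 hx)
  rw [← hN, ncard_coe_finset] at hpos hle
  obtain ⟨w, hw⟩ := Finset.card_pos.1 hpos
  have hfour : 4 ≤ N.card := by simpa using hmissing hw (T := {w}) (by simp [hw])
  obtain hfour | hfive : N.card = 4 ∨ N.card = 5 := by omega
  · refine hK (insert v N) (SimpleGraph.IsNClique.insert ⟨fun x hx y hy hxy => ?_, hfour⟩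
      fun x hx => (hadj x).1 hx)
    by_contra hxy'
    have := hmissing hx (T := {x, y}) (by simp_all)
    rw [Finset.card_pair hxy] at this
    omega
  · obtain ⟨x, y, hy, hxy, hfour⟩ := exists_contractEdge_isNClique_erase (G := G) hfive
      fun x hx y hy z hz hxy hxz hyz => by
        by_contra! hnot
        have := hmissing hx (T := {x, y, z}) (by simp_all)
        rw [Finset.card_eq_three.2 ⟨x, y, z, hxy, hxz, hyz, rfl⟩] at this
        omega
    refine hK' x y hxy _ (hfour.insert (a := v) fun z hz => ?_)
    obtain ⟨hzy, hz⟩ := Finset.mem_erase.1 hz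
    exact contractEdge_adj_of_ne ((hadj z).1 hz) ((hadj y).1 hy).ne hzy

end LowDegree

theorem IsMinorClosed.ncard_edgeSet_le {V : Type*} [Finite V] [DecidableEq V]
    {P : SimpleGraph V → Prop} (hP : IsMinorClosed P) (hK : ∀ G, P G → G.CliqueFree 5) {n : ℕ}
    {G : SimpleGraph V} {S : Finset V} (hG : P G) (hS : G.support ⊆ S) (hn : S.card = n + 1) :
    G.edgeSet.ncard ≤ 3 * n := by
  induction n generalizing G S with
  | zero =>
    obtain ⟨x, rfl⟩ := Finset.card_eq_one.1 hn
    simp [eq_bot_of_support_subset_singleton (by simpa using hS)]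
  | succ n ih =>
    by_contra! hlt
    obtain ⟨H, hHG, hH⟩ := exists_le_ncard_edgeSet_eq (show 3 * n + 4 ≤ G.edgeSet.ncard by omega)
    have hPH : P H := hP.mono hHG hG
    have hHS : H.support ⊆ S := (SimpleGraph.support_mono hHG).trans hS
    obtain ⟨v, hv, hdeg⟩ := exists_ncard_neighborSet_lt hHS (d := 6) (by omega)
    have hSv : (S.erase v).card = n + 1 := by rw [Finset.card_erase_of_mem hv, hn]; rfl
    rcases Nat.eq_zero_or_pos (H.neighborSet v).ncard with hzero | hpos
    · have hsupp : H.support ⊆ S.erase v := by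
        rw [ncard_eq_zero] at hzero
        refine fun a ⟨b, hab⟩ => Finset.mem_erase.2 ⟨?_, hHS ⟨b, hab⟩⟩
        rintro rfl
        exact hzero.subset hab
      have := ih hPH hsupp hSv
      omega
    · obtain ⟨w, hvw, hw⟩ := exists_adj_ncard_commonNeighbors_le_two (hK H hPH)
        (fun x y hxy => hK _ (hP.contract hxy hPH)) hpos (by omega)
      have hsupp : (contractEdge H w v).support ⊆ S.erase v := by
        rw [Finset.coe_erase]
        exact (support_contractEdge_subset hvw.symm).trans (sdiff_subset_sdiff_left hHS)
      have := ih (hP.contract hvw.symm hPH) hsupp hSv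
      have := ncard_edgeSet_le_contractEdge hvw.symm
      rw [SimpleGraph.commonNeighbors_symm] at this
      omega

/-! ### Random sampling -/

section Sampling

open scoped BigOperators Finset

theorem expect_prod_apply {ι κ R : Type*} [Fintype ι] [DecidableEq ι] [Fintype κ] [Semifield R]
    [CharZero R] (g : ι → κ → R) : 𝔼 f : ι → κ, ∏ i, g i (f i) = ∏ i, 𝔼 x, g i x := by
  simp only [Fintype.expect_eq_sum_div_card, Finset.prod_div_distrib, Fintype.prod_sum,
    Fintype.card_fun, Nat.cast_pow, Finset.prod_const, Finset.card_univ]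

theorem expect_card_filter_forall_mem {ι κ α : Type*} [Fintype ι] [DecidableEq ι] [Fintype κ]
    [Nonempty κ] [DecidableEq κ] {A : Finset α} {T : α → Finset ι} {s : α → ι → Finset κ}
    {d q : ℕ} (hT : ∀ a ∈ A, #(T a) = d) (hs : ∀ a ∈ A, ∀ i ∈ T a, #(s a i) = q) :
    𝔼 f : ι → κ, (#{a ∈ A | ∀ i ∈ T a, f i ∈ s a i} : ℝ) =
      #A * (q / Fintype.card κ : ℝ) ^ d := by
  have hprob (a : α) (ha : a ∈ A) :
      𝔼 f : ι → κ, (if ∀ i ∈ T a, f i ∈ s a i then (1 : ℝ) else 0) =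
        (q / Fintype.card κ : ℝ) ^ d := by
    have hfactor (i : ι) : 𝔼 x, (if i ∈ T a → x ∈ s a i then (1 : ℝ) else 0) =
        if i ∈ T a then (q / Fintype.card κ : ℝ) else 1 := by
      by_cases hi : i ∈ T a
      · simp [hi, Fintype.expect_eq_sum_div_card, hs a ha i hi]
      · simp [hi]
    simp only [← Fintype.prod_boole]
    rw [expect_prod_apply fun i x => if i ∈ T a → x ∈ s a i then (1 : ℝ) else 0]
    simp only [hfactor, Finset.prod_ite_mem, Finset.univ_inter, Finset.prod_const, hT a ha]
  simp only [← Finset.sum_boole, Finset.expect_sum_comm]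
  rw [Finset.sum_congr rfl hprob, Finset.sum_const, nsmul_eq_mul]

theorem expect_card_filter_eq_and_eq {ι κ α : Type*} [Fintype ι] [DecidableEq ι] [Fintype κ]
    [Nonempty κ] [DecidableEq κ] {A : Finset α} {i j : α → ι} (hij : ∀ a ∈ A, i a ≠ j a)
    (x y : α → κ) :
    𝔼 f : ι → κ, (#{a ∈ A | f (i a) = x a ∧ f (j a) = y a} : ℝ) =
      #A * (1 / Fintype.card κ : ℝ) ^ 2 := by
  rw [← Nat.cast_one, ← expect_card_filter_forall_mem (A := A) (T := fun a => {i a, j a})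
    (s := fun a l => if l = i a then {x a} else {y a}) (fun a ha => Finset.card_pair (hij a ha))
    fun a _ l _ => by split_ifs <;> simp]
  refine Finset.expect_congr rfl fun f _ => ?_
  congr 2
  refine Finset.filter_congr fun a ha => ?_
  simp [(hij a ha).symm]

theorem exists_injective_prodMk_fin {α β : Type*} [Finite α] {b : α → β} {m : ℕ}
    (hb : ∀ z, {a | b a = z}.ncard ≤ m) :
    ∃ r : α → Fin m, Function.Injective fun a => (b a, r a) := by
  have hfiber (z : β) : Nonempty ({a | b a = z} ↪ Fin m) := by
    have := Fintype.ofFinite {a | b a = z}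
    refine Function.Embedding.nonempty_of_card_le ?_
    rw [Fintype.card_fin, ← Nat.card_eq_fintype_card]
    exact hb z
  let g (z : β) : {a | b a = z} ↪ Fin m := (hfiber z).some
  have hg {a : α} {z : β} (ha : b a = z) : g (b a) ⟨a, rfl⟩ = g z ⟨a, ha⟩ := by
    subst ha
    rfl
  refine ⟨fun a => g (b a) ⟨a, rfl⟩, fun a c hac => ?_⟩
  obtain ⟨hbac, hgac⟩ := Prod.mk.inj hac
  exact congrArg Subtype.val ((g (b c)).injective ((hg hbac).symm.trans hgac))

variable {V E : Type*} [DecidableEq V]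

/-- A bound on the number of edges of a simple graph without conflicting edges, for a multigraph
with end map `ends` and a set `C` of conflicting pairs of edges: each set `F` of pairwise
non-parallel edges, with all ends in `W` and with no pair from `C`, has at most `k * #W`
elements. -/
def HasLinearBound (ends : E → Sym2 V) (C : Finset (E × E)) (k : ℕ) : Prop :=
  ∀ (F : Finset E) (W : Finset V), InjOn ends F → (∀ e ∈ F, (ends e).toFinset ⊆ W) →
    (∀ x ∈ C, x.1 ∈ F → x.2 ∉ F) → #F ≤ k * #W

namespace HasLinearBound

variable {ends : E → Sym2 V} {C : Finset (E × E)} {k m : ℕ}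

theorem card_le_add_card_filter [DecidableEq E] (h : HasLinearBound ends C k) {F : Finset E}
    {W : Finset V} (hinj : InjOn ends F) (hW : ∀ e ∈ F, (ends e).toFinset ⊆ W) :
    #F ≤ k * #W + #{x ∈ C | x.1 ∈ F ∧ x.2 ∈ F} := by
  set D := {x ∈ C | x.1 ∈ F ∧ x.2 ∈ F}
  have hsdiff : #(F \ D.image Prod.fst) ≤ k * #W := by
    refine h _ _ (hinj.mono (by simp)) (fun e he => hW e (Finset.mem_sdiff.1 he).1)
      fun x hx h₁ h₂ => ?_
    rw [Finset.mem_sdiff] at h₁ h₂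
    exact h₁.2 (Finset.mem_image_of_mem _ (Finset.mem_filter.2 ⟨hx, h₁.1, h₂.1⟩))
  have := Finset.le_card_sdiff (D.image Prod.fst) F
  have : #(D.image Prod.fst) ≤ #D := Finset.card_image_le
  omega

-- Keep one edge of each parallel class, chosen by a uniformly random label in `Fin m`.
theorem mul_card_le_add_card_filter [Finite V] [Finite E] [DecidableEq E]
    (h : HasLinearBound ends C k) (hC : ∀ x ∈ C, ends x.1 ≠ ends x.2)
    (hm : ∀ z, {e | ends e = z}.ncard ≤ m) {A : Finset E} {W : Finset V}
    (hW : ∀ e ∈ A, (ends e).toFinset ⊆ W) :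
    (m * #A : ℝ) ≤ k * m ^ 2 * #W + #{x ∈ C | x.1 ∈ A ∧ x.2 ∈ A} := by
  rcases Nat.eq_zero_or_pos m with rfl | hpos
  · simp
  have : NeZero m := ⟨hpos.ne'⟩
  have := Fintype.ofFinite V
  obtain ⟨r, hr⟩ := exists_injective_prodMk_fin hm
  set D := {x ∈ C | x.1 ∈ A ∧ x.2 ∈ A}
  have hsample (φ : Sym2 V → Fin m) : (#{e ∈ A | φ (ends e) = r e} : ℝ) ≤
      k * #W + #{x ∈ D | φ (ends x.1) = r x.1 ∧ φ (ends x.2) = r x.2} := by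
    norm_cast
    refine (h.card_le_add_card_filter (fun e he f hf hef => hr (Prod.ext hef ?_))
      fun e he => hW e (Finset.mem_filter.1 he).1).trans_eq ?_
    · exact (Finset.mem_filter.1 he).2.symm.trans (hef ▸ (Finset.mem_filter.1 hf).2)
    · congr 2
      grind
  have hA : 𝔼 φ : Sym2 V → Fin m, (#{e ∈ A | φ (ends e) = r e} : ℝ) = #A * (1 / m) := by
    simpa using expect_card_filter_forall_mem (κ := Fin m) (A := A) (T := fun e => {ends e})
      (s := fun e _ => {r e}) (d := 1) (q := 1) (by simp) (by simp)
  have hD : 𝔼 φ : Sym2 V → Fin m,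
      (#{x ∈ D | φ (ends x.1) = r x.1 ∧ φ (ends x.2) = r x.2} : ℝ) = #D * (1 / m) ^ 2 := by
    simpa using expect_card_filter_eq_and_eq (A := D)
      (fun x hx => hC x (Finset.mem_filter.1 hx).1) (fun x => r x.1) (fun x => r x.2)
  have hmean := Finset.expect_le_expect fun φ (_ : φ ∈ Finset.univ) => hsample φ
  rw [Finset.expect_add_distrib, Fintype.expect_const, hA, hD] at hmean
  have hm' : (0 : ℝ) < m := Nat.cast_pos.2 hpos
  field_simp at hmean
  linarith

-- Keep each vertex independently with probability `q / N`.
theorem mul_card_mul_sq_le [Fintype V] [Fintype E] (h : HasLinearBound ends C k)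
    (hloop : ∀ e, ¬ (ends e).IsDiag)
    (hC : ∀ x ∈ C, Disjoint (ends x.1).toFinset (ends x.2).toFinset)
    (hm : ∀ z, {e | ends e = z}.ncard ≤ m) {q N : ℕ} (hN : N ≠ 0) (hq : q ≤ N) :
    m * (Fintype.card E * (q / N : ℝ) ^ 2) ≤
      k * m ^ 2 * (Fintype.card V * (q / N)) + #C * (q / N : ℝ) ^ 4 := by
  classical
  have : NeZero N := ⟨hN⟩
  have hcard (e : E) : #(ends e).toFinset = 2 := Sym2.card_toFinset_of_not_isDiag _ (hloop e)
  obtain ⟨K, -, hK⟩ := Finset.exists_subset_card_eq (show q ≤ #(Finset.univ : Finset (Fin N)) by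
    simpa using hq)
  have hsample (ψ : V → Fin N) : m * (#{e | ∀ v ∈ (ends e).toFinset, ψ v ∈ K} : ℝ) ≤
      k * m ^ 2 * #{v | ψ v ∈ K} +
        #{x ∈ C | ∀ v ∈ (ends x.1).toFinset ∪ (ends x.2).toFinset, ψ v ∈ K} := by
    refine (h.mul_card_le_add_card_filter (fun x hx hends => ?_) hm (W := {v | ψ v ∈ K})
      fun e he v hv => ?_).trans_eq ?_
    · have := hC x hx
      rw [hends, disjoint_self] at this
      exact (ends x.2).toFinset_ne_empty this
    · simp_all
    · simp [or_imp, forall_and]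
  have hmean := Finset.expect_le_expect fun ψ (_ : ψ ∈ Finset.univ) => hsample ψ
  have hV := expect_card_filter_forall_mem (A := Finset.univ) (T := fun v : V => {v})
    (s := fun _ _ => K) (d := 1) (by simp) (fun _ _ _ _ => hK)
  have hE := expect_card_filter_forall_mem (A := Finset.univ) (T := fun e => (ends e).toFinset)
    (s := fun _ _ => K) (fun e _ => hcard e) (fun _ _ _ _ => hK)
  have hconf := expect_card_filter_forall_mem (A := C)
    (T := fun x => (ends x.1).toFinset ∪ (ends x.2).toFinset) (s := fun _ _ => K) (d := 4)
    (fun x hx => by rw [Finset.card_union_of_disjoint (hC x hx), hcard, hcard])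
    (fun _ _ _ _ => hK)
  simp only [Finset.mem_singleton, forall_eq, pow_one] at hV
  simpa only [Finset.expect_add_distrib, ← Finset.mul_expect, hV, hE, hconf, Finset.card_univ,
    Fintype.card_fin] using hmean

theorem card_pow_three_le [Fintype V] [Fintype E] (h : HasLinearBound ends C k)
    (hloop : ∀ e, ¬ (ends e).IsDiag)
    (hC : ∀ x ∈ C, Disjoint (ends x.1).toFinset (ends x.2).toFinset)
    (hm : ∀ z, {e | ends e = z}.ncard ≤ m)
    (hE : (k + 1) * m * Fintype.card V ≤ Fintype.card E) :
    (Fintype.card E : ℝ) ^ 3 ≤ (k + 1) ^ 3 * m * (Fintype.card V : ℝ) ^ 2 * #C := by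
  rcases isEmpty_or_nonempty E with _ | ⟨⟨e⟩⟩
  · rw [Fintype.card_eq_zero, Nat.cast_zero, zero_pow three_ne_zero]
    positivity
  have hEpos : (0 : ℝ) < Fintype.card E := Nat.cast_pos.2 (Fintype.card_pos_iff.2 ⟨e⟩)
  have hVpos : (0 : ℝ) < Fintype.card V :=
    Nat.cast_pos.2 (Fintype.card_pos_iff.2 ⟨(ends e).out.1⟩)
  have hmpos : (0 : ℝ) < m :=
    Nat.cast_pos.2 (((ncard_pos (s := {f | ends f = ends e})).2 ⟨e, rfl⟩).trans_le (hm (ends e)))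
  have hsample := h.mul_card_mul_sq_le hloop hC hm (Nat.cast_ne_zero.1 hEpos.ne') hE
  push_cast at hsample
  field_simp at hsample
  linarith

end HasLinearBound

end Sampling

/-! ### Drawings of multigraphs -/

/-- A drawing in `X` of the multigraph with vertices `V` and edges `E` whose edge `e` joins the
two vertices of `ends e`. The edge `e` is drawn as the restriction of `curve e` to the unit
interval, traversed in either direction, and may pass through itself but not through a vertex. -/
structure MultigraphDrawing (V E X : Type*) [TopologicalSpace X] where
  vert : V → X
  ends : E → Sym2 V
  curve : E → ℝ → X
  injective_vert : Function.Injective vert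
  continuousOn_curve : ∀ e, ContinuousOn (curve e) (Icc 0 1)
  map_vert_ends : ∀ e, (ends e).map vert = s(curve e 0, curve e 1)
  curve_notMem_range_vert : ∀ e, ∀ t ∈ Ioo (0 : ℝ) 1, curve e t ∉ range vert

namespace MultigraphDrawing

variable {V E X : Type*} [TopologicalSpace X] (D : MultigraphDrawing V E X) {e f : E}

/-- The set on which an edge is drawn, including its end points. -/
def arc (e : E) : Set X := D.curve e '' Icc 0 1

/-- The set on which an edge is drawn, without its end points. -/
def openArc (e : E) : Set X := D.curve e '' Ioo 0 1

/-- The ordered pairs of independent edges that cross. Crossings of edges with a common end are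
left out, which makes a lower bound on the number of crossing pairs stronger. -/
def crossingPairs : Set (E × E) :=
  {x | Disjoint (D.ends x.1 : Set V) (D.ends x.2) ∧ ¬ Disjoint (D.openArc x.1) (D.openArc x.2)}

/-- The crossings of pairs of distinct edges: each crossing consists of the point and the ordered
pair of edges that meet there. -/
def crossings : Set (X × E × E) :=
  {x | x.2.1 ≠ x.2.2 ∧ x.1 ∈ D.openArc x.2.1 ∧ x.1 ∈ D.openArc x.2.2}

theorem ncard_crossingPairs_le (hfin : D.crossings.Finite) :
    D.crossingPairs.ncard ≤ D.crossings.ncard := by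
  refine (ncard_le_ncard ?_ (hfin.image Prod.snd)).trans (ncard_image_le hfin)
  rintro ⟨e, f⟩ ⟨hends, hmeet⟩
  obtain ⟨p, hpe, hpf⟩ := not_disjoint_iff.1 hmeet
  refine ⟨(p, e, f), ⟨fun hef : e = f => ?_, hpe, hpf⟩, rfl⟩
  subst hef
  exact disjoint_left.1 hends (D.ends e).out_fst_mem (D.ends e).out_fst_mem

theorem arc_eq_union (e : E) : D.arc e = D.openArc e ∪ D.vert '' D.ends e := by
  rw [arc, openArc, ← Ioo_union_both zero_le_one, image_union, image_pair, ← Sym2.coe_map,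
    D.map_vert_ends, Sym2.coe_mk]

theorem disjoint_openArc_range_vert (e : E) : Disjoint (D.openArc e) (range D.vert) := by
  rw [disjoint_left]
  rintro _ ⟨t, ht, rfl⟩
  exact D.curve_notMem_range_vert e t ht

theorem disjoint_arc (hends : Disjoint (D.ends e : Set V) (D.ends f))
    (hcross : (e, f) ∉ D.crossingPairs) : Disjoint (D.arc e) (D.arc f) := by
  have hopen : Disjoint (D.openArc e) (D.openArc f) := by
    by_contra hmeet
    exact hcross ⟨hends, hmeet⟩
  simp only [arc_eq_union, disjoint_union_left, disjoint_union_right]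
  exact ⟨⟨hopen, ((D.disjoint_openArc_range_vert f).mono_right (image_subset_range _ _)).symm⟩,
    (D.disjoint_openArc_range_vert e).mono_right (image_subset_range _ _),
    (disjoint_image_iff D.injective_vert).2 hends⟩

theorem joinedIn_arc {u v : V} (huv : D.ends e = s(u, v)) :
    JoinedIn (D.arc e) (D.vert u) (D.vert v) := by
  have hmem {a : V} (ha : a ∈ D.ends e) : D.vert a ∈ D.arc e := by
    rw [arc_eq_union]
    exact Or.inr (mem_image_of_mem _ ha)
  have harc : IsPathConnected (D.arc e) :=
    ((convex_Icc (0 : ℝ) 1).isPathConnected (nonempty_Icc.2 zero_le_one)).image'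
      (D.continuousOn_curve e)
  exact harc.joinedIn _ (hmem (huv ▸ Sym2.mem_mk_left u v)) _ (hmem (huv ▸ Sym2.mem_mk_right u v))

theorem hasSeparatedDrawing {F : Set E}
    (hF : ∀ e ∈ F, ∀ f ∈ F, (e, f) ∉ D.crossingPairs) :
    HasSeparatedDrawing X (SimpleGraph.fromEdgeSet (D.ends '' F)) := by
  refine ⟨D.vert, fun u v => ⋃ e ∈ {e ∈ F | D.ends e = s(u, v)}, D.arc e, ?_, ?_⟩
  · rintro u v ⟨⟨e, he, huv⟩, -⟩
    exact (D.joinedIn_arc huv).mono (subset_biUnion_of_mem (u := D.arc)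
      (show e ∈ {e ∈ F | D.ends e = s(u, v)} from ⟨he, huv⟩))
  · intro u v w z _ _ hdisj
    simp only [disjoint_iUnion_left, disjoint_iUnion_right]
    rintro f ⟨hf, hwz⟩ e ⟨he, huv⟩
    refine D.disjoint_arc ?_ (hF e he f hf)
    rwa [huv, hwz, Sym2.coe_mk, Sym2.coe_mk]

theorem hasLinearBound [Finite V] [DecidableEq V] (D : MultigraphDrawing V E (ℝ × ℝ))
    (hloop : ∀ e, ¬ (D.ends e).IsDiag) {C : Finset (E × E)} (hC : D.crossingPairs ⊆ C) :
    HasLinearBound D.ends C 3 := by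
  intro F W hinj hW hF
  rcases F.eq_empty_or_nonempty with rfl | ⟨e₀, he₀⟩
  · simp
  obtain ⟨n, hn⟩ : ∃ n, W.card = n + 1 :=
    Nat.exists_eq_add_one.2 (Finset.card_pos.2 ((Finset.nonempty_iff_ne_empty.2
      (D.ends e₀).toFinset_ne_empty).mono (hW e₀ he₀)))
  let G := SimpleGraph.fromEdgeSet (D.ends '' F)
  have hG : G.edgeSet = D.ends '' F := by
    rw [SimpleGraph.edgeSet_fromEdgeSet, sdiff_eq_left, disjoint_left]
    rintro _ ⟨e, -, rfl⟩
    exact hloop e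
  have hsupp : G.support ⊆ W := by
    rintro u ⟨v, ⟨e, he, huv⟩, -⟩
    exact hW e he (Sym2.mem_toFinset.2 (huv ▸ Sym2.mem_mk_left u v))
  have hsep : HasSeparatedDrawing ℂ G :=
    (D.hasSeparatedDrawing fun e he f hf hef => hF (e, f) (hC hef) he hf).map
      Complex.equivRealProdCLM.symm.continuous Complex.equivRealProdCLM.symm.injective
  have hle := HasSeparatedDrawing.isMinorClosed.ncard_edgeSet_le
    (fun _ h => h.cliqueFree_five) hsep hsupp hn
  rw [hG, hinj.ncard_image, ncard_coe_finset] at hle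
  omega

end MultigraphDrawing

theorem stmt16_general {V E : Type*} [Fintype V] [Fintype E] (D : MultigraphDrawing V E (ℝ × ℝ))
    {m : ℕ} (hloop : ∀ e, ¬ (D.ends e).IsDiag) (hm : ∀ z, {e | D.ends e = z}.ncard ≤ m)
    (hE : 4 * m * Fintype.card V ≤ Fintype.card E) :
    1 / 64 * (Fintype.card E : ℝ) ^ 3 / (m * (Fintype.card V : ℝ) ^ 2) ≤
      D.crossingPairs.ncard := by
  classical
  obtain ⟨C, hC⟩ := D.crossingPairs.toFinite.exists_finset_coe
  have hdisj (x : E × E) (hx : x ∈ C) : Disjoint (D.ends x.1).toFinset (D.ends x.2).toFinset := by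
    have hx' : x ∈ D.crossingPairs := hC.subset hx
    simpa only [Finset.disjoint_left, disjoint_left, Sym2.mem_toFinset, SetLike.mem_coe] using hx'.1
  have hpow := (D.hasLinearBound hloop hC.superset).card_pow_three_le hloop hdisj hm hE
  refine div_le_of_le_mul₀ (by positivity) (by positivity) ?_
  rw [← hC, ncard_coe_finset]
  norm_num at hpow
  linarith

/-- Crossing lemma for multigraphs (Székely). A drawing of a multigraph with
`Vn` vertices (`vert`), `En` edges, each edge `e` drawn as a curve `γ e` (continuous and
injective on `[0,1]`) joining its endpoint vertices and avoiding vertices in its interior,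
with edge multiplicity at most `m` and `En ≥ 4 m Vn`: if the set of crossings (points
interior to two distinct edges, counted with the pair of edges) is finite, then its size is
at least `c·En³/(m·Vn²)` for an absolute constant `c > 0`. -/
theorem stmt16 :
    ∃ c : ℝ, 0 < c ∧
      ∀ (Vn En m : ℕ) (vert : Fin Vn → ℝ × ℝ) (ends : Fin En → Fin Vn × Fin Vn)
        (γ : Fin En → ℝ → ℝ × ℝ),
        Function.Injective vert →
        (∀ e, ContinuousOn (γ e) (Icc 0 1)) →
        (∀ e, InjOn (γ e) (Icc 0 1)) →
        (∀ e, γ e 0 = vert (ends e).1 ∧ γ e 1 = vert (ends e).2) →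
        (∀ e, ∀ t ∈ Ioo (0 : ℝ) 1, γ e t ∉ Set.range vert) →
        (∀ u v : Fin Vn,
          ({e : Fin En | ends e = (u, v) ∨ ends e = (v, u)}).ncard ≤ m) →
        4 * m * Vn ≤ En →
        ∀ X : Set ((ℝ × ℝ) × Fin En × Fin En),
          X = {x | x.2.1 ≠ x.2.2 ∧
                (∃ t ∈ Ioo (0 : ℝ) 1, γ x.2.1 t = x.1) ∧
                (∃ s ∈ Ioo (0 : ℝ) 1, γ x.2.2 s = x.1)} →
          X.Finite →
          c * (En : ℝ) ^ 3 / ((m : ℝ) * (Vn : ℝ) ^ 2) ≤ X.ncard := by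
  refine ⟨1 / 64, by norm_num, ?_⟩
  rintro Vn En m vert ends γ hvert hcont hinj hends havoid hm hE X rfl hfin
  let D : MultigraphDrawing (Fin Vn) (Fin En) (ℝ × ℝ) :=
    { vert := vert
      ends := fun e => s((ends e).1, (ends e).2)
      curve := γ
      injective_vert := hvert
      continuousOn_curve := hcont
      map_vert_ends := fun e => by rw [Sym2.map_mk, (hends e).1, (hends e).2]
      curve_notMem_range_vert := havoid }
  have hloop (e : Fin En) : ¬ (D.ends e).IsDiag := fun h =>
    zero_ne_one (hinj e (left_mem_Icc.2 zero_le_one) (right_mem_Icc.2 zero_le_one)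
      (by rw [(hends e).1, (hends e).2, Sym2.mk_isDiag_iff.1 h]))
  have hmult : ∀ z, {e | D.ends e = z}.ncard ≤ m :=
    Sym2.ind fun u v => by simpa [D, Prod.ext_iff] using hm u v
  have hpairs := stmt16_general D hloop hmult (by simpa only [Fintype.card_fin] using hE)
  rw [Fintype.card_fin, Fintype.card_fin] at hpairs
  exact hpairs.trans (Nat.cast_le.2 (D.ncard_crossingPairs_le hfin))
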